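/- Fix t > 0 with t ≠ 2 and x ∈ ℝ, and let g_n = (c_n x + d_n)^{1/t} for n large enough that c_n x + d_n > 0. Then as n → ∞, Φ(g_n)^{n−1} = Λ(x) ( 1 + ϑ₁ e^{−x} b_n^{−2} + e^{−x} b_n^{−4} ( (ϑ₁²/2) e^{−x} − ϑ₂ ) + O(b_n^{−6}) ), where ϑ₁ = 1 + x + ((2−t)/2) x² and ϑ₂ = 3 + 3x + (3/2) x² + ((2−t)(2t+1)/6) x³ + ((t−2)²/8) x⁴. -/

import Mathlib

open Real Filter Topology

/-- The standard normal distribution function. -/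
noncomputable def stdNormalCDF (x : ℝ) : ℝ :=
  ∫ u in Set.Iic x, Real.exp (-u ^ 2 / 2) / Real.sqrt (2 * Real.pi)

/-- The Gumbel distribution function `Λ(x) = exp(−e^{−x})`. -/
noncomputable def gumbel (x : ℝ) : ℝ := Real.exp (-Real.exp (-x))

/-!
Write `β = b_n`, so that `√(2π) β e^{β²/2} = n`. With `g = g_n`,
`n (1 - Φ(g)) = e^{(β² - g²)/2} · (β / g) · R(g)`,
where `R(g)` is `g` times the Mills ratio `(1 - Φ(g)) / φ(g)`. The first two factors are analytic
functions of `β⁻²` because `g = β (1 + t x β⁻²)^{1/t}`; iterated integration by parts gives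
`R(g) = 1 - g⁻² + 3 g⁻⁴ + O(g⁻⁶)`. Multiplying, `n (1 - Φ(g))` is known up to `O(β⁻⁶)`. Finally
`Φ(g)^{n-1} = exp ((n - 1) log (1 - q))` with `q = 1 - Φ(g) = O(1/n)`, and both `n q²` and the
shift from `n` to `n - 1` cost only `O(1/n)`, which is far below `β⁻⁶`.
-/

open Asymptotics MeasureTheory Set ProbabilityTheory

/-- `f = a₀ + a₁ s + a₂ s² + O(s³)` along the filter `l`: the second-order asymptotic expansion of
`f` in powers of a gauge `s`. The gauge is not required to vanish in the limit; the rules that need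
`s → 0` assume it separately. -/
def HasQuadExpansion {α : Type*} (l : Filter α) (s f : α → ℝ) (a₀ a₁ a₂ : ℝ) : Prop :=
  (fun i => f i - (a₀ + a₁ * s i + a₂ * s i ^ 2)) =O[l] fun i => s i ^ 3

namespace HasQuadExpansion

variable {α β : Type*} {l : Filter α} {s f h : α → ℝ} {a₀ a₁ a₂ b₀ b₁ b₂ : ℝ}

theorem isBigO_one_quadratic (hs : Tendsto s l (𝓝 0)) (a₀ a₁ a₂ : ℝ) :
    (fun i => a₀ + a₁ * s i + a₂ * s i ^ 2) =O[l] fun _ => (1 : ℝ) :=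
  ((tendsto_const_nhds.add (hs.const_mul a₁)).add ((hs.pow 2).const_mul a₂)).isBigO_one ℝ

theorem add_isBigO (hf : HasQuadExpansion l s f a₀ a₁ a₂)
    (hfh : (fun i => h i - f i) =O[l] fun i => s i ^ 3) : HasQuadExpansion l s h a₀ a₁ a₂ :=
  (IsBigO.add hf hfh).congr_left fun i => by ring

theorem congr' (hf : HasQuadExpansion l s f a₀ a₁ a₂) (hfh : f =ᶠ[l] h) :
    HasQuadExpansion l s h a₀ a₁ a₂ :=
  IsBigO.congr' hf (hfh.mono fun _ hi => congrArg (· - _) hi) EventuallyEq.rfl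

theorem comp_tendsto {k : β → α} {l' : Filter β} (hf : HasQuadExpansion l s f a₀ a₁ a₂)
    (hk : Tendsto k l' l) : HasQuadExpansion l' (s ∘ k) (f ∘ k) a₀ a₁ a₂ :=
  IsBigO.comp_tendsto hf hk

theorem tendsto (hs : Tendsto s l (𝓝 0)) (hf : HasQuadExpansion l s f a₀ a₁ a₂) :
    Tendsto f l (𝓝 a₀) := by
  have hrem := IsBigO.trans_tendsto hf (by simpa using hs.pow 3)
  have hmain := (tendsto_const_nhds (x := a₀)).add (hs.const_mul a₁) |>.add
    ((hs.pow 2).const_mul a₂)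
  simpa using hrem.add hmain

theorem isBigO_one (hs : Tendsto s l (𝓝 0)) (hf : HasQuadExpansion l s f a₀ a₁ a₂) :
    f =O[l] fun _ => (1 : ℝ) :=
  (hf.tendsto hs).isBigO_one ℝ

theorem const (c : ℝ) : HasQuadExpansion l s (fun _ => c) c 0 0 :=
  (isBigO_zero _ _).congr_left fun i => by ring

theorem gauge : HasQuadExpansion l s s 0 1 0 :=
  (isBigO_zero _ _).congr_left fun i => by ring

theorem add (hf : HasQuadExpansion l s f a₀ a₁ a₂) (hh : HasQuadExpansion l s h b₀ b₁ b₂) :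
    HasQuadExpansion l s (fun i => f i + h i) (a₀ + b₀) (a₁ + b₁) (a₂ + b₂) :=
  (IsBigO.add hf hh).congr_left fun i => by ring

theorem mul (hs : Tendsto s l (𝓝 0)) (hf : HasQuadExpansion l s f a₀ a₁ a₂)
    (hh : HasQuadExpansion l s h b₀ b₁ b₂) :
    HasQuadExpansion l s (fun i => f i * h i)
      (a₀ * b₀) (a₀ * b₁ + a₁ * b₀) (a₀ * b₂ + a₁ * b₁ + a₂ * b₀) := by
  have hleft := IsBigO.mul hf (hh.isBigO_one hs)
  have hright := IsBigO.mul (isBigO_one_quadratic hs a₀ a₁ a₂) hh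
  have hhigh := (isBigO_one_quadratic hs (a₁ * b₂ + a₂ * b₁) (a₂ * b₂) 0).mul
    (isBigO_refl (fun i => s i ^ 3) l)
  simp only [mul_one, one_mul] at hleft hright hhigh
  exact ((hleft.add hright).add hhigh).congr_left fun i => by ring

theorem const_mul (c : ℝ) (hf : HasQuadExpansion l s f a₀ a₁ a₂) :
    HasQuadExpansion l s (fun i => c * f i) (c * a₀) (c * a₁) (c * a₂) :=
  (IsBigO.const_mul_left hf c).congr_left fun i => by ring

theorem isBigO_gauge (hs : Tendsto s l (𝓝 0)) (hf : HasQuadExpansion l s f 0 a₁ a₂) :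
    f =O[l] s := by
  have hmain := (isBigO_one_quadratic hs a₁ a₂ 0).mul (isBigO_refl s l)
  have hrem := IsBigO.trans hf
    (((hs.pow 2).isBigO_one ℝ).mul (isBigO_refl s l) |>.congr_left fun i => (pow_succ _ 2).symm)
  simp only [one_mul] at hmain hrem
  exact (hrem.add hmain).congr_left fun i => by ring

theorem change_gauge {r : α → ℝ} (hs : Tendsto s l (𝓝 0)) (hf : HasQuadExpansion l r f a₀ a₁ a₂)
    (hr : HasQuadExpansion l s r 0 b₁ b₂) :
    HasQuadExpansion l s f a₀ (a₁ * b₁) (a₁ * b₂ + a₂ * b₁ ^ 2) := by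
  have hpoly := ((const a₀).add (hr.const_mul a₁)).add ((hr.mul hs hr).const_mul a₂)
  have hrem := (IsBigO.trans hf ((hr.isBigO_gauge hs).pow 3)).congr_left fun i => by
    rw [pow_two, add_assoc, ← add_assoc]
  convert hpoly.add_isBigO hrem using 1 <;> ring

theorem comp_const_mul {φ : ℝ → ℝ} (hs : Tendsto s l (𝓝 0))
    (hφ : HasQuadExpansion (𝓝 0) id φ a₀ a₁ a₂) (y : ℝ) :
    HasQuadExpansion l s (fun i => φ (y * s i)) a₀ (a₁ * y) (a₂ * y ^ 2) := by
  have hys : HasQuadExpansion l s (fun i => y * s i) 0 y 0 := by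
    simpa using gauge.const_mul y
  simpa [Function.comp_def] using (hφ.comp_tendsto (hys.tendsto hs)).change_gauge hs hys

theorem of_hasFPowerSeriesAt {φ : ℝ → ℝ} {p : FormalMultilinearSeries ℝ ℝ ℝ}
    (hφ : HasFPowerSeriesAt φ p 0) :
    HasQuadExpansion (𝓝 0) id φ (p.coeff 0) (p.coeff 1) (p.coeff 2) := by
  have htaylor := hφ.isBigO_sub_partialSum_pow 3
  simp only [← norm_pow] at htaylor
  refine htaylor.of_norm_right.congr_left fun y => ?_
  simp only [FormalMultilinearSeries.partialSum, Finset.sum_range_succ, Finset.sum_range_zero,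
    FormalMultilinearSeries.apply_eq_pow_smul_coeff, smul_eq_mul, zero_add, id_eq]
  ring

theorem exp (hs : Tendsto s l (𝓝 0)) (hf : HasQuadExpansion l s f a₀ a₁ a₂) :
    HasQuadExpansion l s (fun i => Real.exp (f i)) (Real.exp a₀) (Real.exp a₀ * a₁)
      (Real.exp a₀ * (a₂ + a₁ ^ 2 / 2)) := by
  have hexp : HasQuadExpansion (𝓝 0) id Real.exp 1 1 (1 / 2) :=
    (Real.exp_sub_sum_range_isBigO_pow 3).congr_left fun y => by
      simp only [Finset.sum_range_succ, Finset.sum_range_zero, Nat.factorial, id_eq]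
      push_cast
      ring
  have hcentred : HasQuadExpansion l s (fun i => f i + -a₀) 0 a₁ a₂ := by
    simpa using hf.add (const (-a₀))
  have h := ((hexp.comp_tendsto (hcentred.tendsto hs)).change_gauge hs hcentred).const_mul
    (Real.exp a₀)
  convert h using 1
  · ext i
    rw [Function.comp_apply, ← Real.exp_add, add_neg_cancel_comm_assoc]
  all_goals ring

end HasQuadExpansion

theorem coeff_binomialSeries (p : ℝ) (n : ℕ) :
    (binomialSeries ℝ p).coeff n = (descPochhammer ℝ n).eval p / n.factorial := by
  rw [binomialSeries, FormalMultilinearSeries.coeff_ofScalars, Ring.choose_eq_smul,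
    Polynomial.descPochhammer_smeval_eq_ascPochhammer, Polynomial.ascPochhammer_smeval_cast,
    Polynomial.ascPochhammer_smeval_eq_eval, descPochhammer_eval_eq_ascPochhammer,
    smul_eq_mul]
  field_simp

section BinomialSeries

variable {α : Type*} {l : Filter α} {s : α → ℝ}

theorem hasQuadExpansion_one_add_rpow (hs : Tendsto s l (𝓝 0)) (y p : ℝ) :
    HasQuadExpansion l s (fun i => (1 + y * s i) ^ p) 1 (p * y) (p * (p - 1) / 2 * y ^ 2) := by
  have h := (HasQuadExpansion.of_hasFPowerSeriesAt
    (Real.one_add_rpow_hasFPowerSeriesAt_zero (a := p))).comp_const_mul hs y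
  simpa [coeff_binomialSeries, descPochhammer_succ_right, Nat.factorial] using h

theorem hasQuadExpansion_dslope_one_add_rpow (hs : Tendsto s l (𝓝 0)) (y p : ℝ) :
    HasQuadExpansion l s (fun i => dslope (fun z : ℝ => (1 + z) ^ p) 0 (y * s i))
      p (p * (p - 1) / 2 * y) (p * (p - 1) * (p - 2) / 6 * y ^ 2) := by
  have h := (HasQuadExpansion.of_hasFPowerSeriesAt
    (Real.one_add_rpow_hasFPowerSeriesAt_zero (a := p)).has_fpower_series_dslope_fslope
    ).comp_const_mul hs y
  simpa [coeff_binomialSeries, descPochhammer_succ_right, Nat.factorial] using h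

end BinomialSeries

theorem log_one_add_sub_self_isBigO :
    (fun y : ℝ => Real.log (1 + y) - y) =O[𝓝 0] fun y => y ^ 2 := by
  have htaylor := hasFPowerSeriesAt_log_one_add.isBigO_sub_partialSum_pow 2
  simpa [FormalMultilinearSeries.partialSum, Finset.sum_range_succ] using htaylor

section PowPred

variable {s q : ℕ → ℝ} {a₀ a₁ a₂ : ℝ}

theorem isBigO_of_hasQuadExpansion_natCast_mul (hs : Tendsto s atTop (𝓝 0))
    (hn : (fun n : ℕ => (n : ℝ)⁻¹) =O[atTop] fun n => s n ^ 3)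
    (hq : HasQuadExpansion atTop s (fun n => n * q n) a₀ a₁ a₂) :
    q =O[atTop] fun n => s n ^ 3 := by
  refine ((hq.isBigO_one hs).mul hn).congr' ?_ (by simp)
  filter_upwards [eventually_gt_atTop 0] with n hpos
  field_simp

theorem tendsto_zero_of_hasQuadExpansion_natCast_mul (hs : Tendsto s atTop (𝓝 0))
    (hn : (fun n : ℕ => (n : ℝ)⁻¹) =O[atTop] fun n => s n ^ 3)
    (hq : HasQuadExpansion atTop s (fun n => n * q n) a₀ a₁ a₂) : Tendsto q atTop (𝓝 0) :=
  (isBigO_of_hasQuadExpansion_natCast_mul hs hn hq).trans_tendsto (by simpa using hs.pow 3)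

theorem hasQuadExpansion_pred_mul_log_one_sub (hs : Tendsto s atTop (𝓝 0))
    (hn : (fun n : ℕ => (n : ℝ)⁻¹) =O[atTop] fun n => s n ^ 3)
    (hq : HasQuadExpansion atTop s (fun n => n * q n) a₀ a₁ a₂) :
    HasQuadExpansion atTop s (fun n => ((n - 1 : ℕ) : ℝ) * Real.log (1 - q n))
      (-a₀) (-a₁) (-a₂) := by
  have hq_small := isBigO_of_hasQuadExpansion_natCast_mul hs hn hq
  have hq_zero : Tendsto (fun n => -q n) atTop (𝓝 0) := by
    simpa using (tendsto_zero_of_hasQuadExpansion_natCast_mul hs hn hq).neg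
  have hpred : (fun n : ℕ => ((n - 1 : ℕ) : ℝ)) =O[atTop] fun n => (n : ℝ) :=
    .of_norm_le fun n => by simp
  have hquad : (fun n => ((n - 1 : ℕ) : ℝ) * (Real.log (1 - q n) + q n))
      =O[atTop] fun n => s n ^ 3 := by
    have hlog := log_one_add_sub_self_isBigO.comp_tendsto hq_zero
    refine ((hpred.mul hlog).congr_left fun n => ?_).trans
      (((hq.isBigO_one hs).mul hq_small).congr (fun n => ?_) fun n => one_mul _)
    · simp [sub_eq_add_neg]
    · simp only [Function.comp_apply]
      ring
  have hmain : HasQuadExpansion atTop s (fun n => -1 * (n * q n)) (-a₀) (-a₁) (-a₂) := by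
    simpa using hq.const_mul (-1)
  refine hmain.add_isBigO ((hquad.add hq_small).congr' ?_ EventuallyEq.rfl)
  filter_upwards [eventually_ge_atTop 1] with n hn1
  push_cast [hn1]
  ring

theorem hasQuadExpansion_one_sub_pow_pred (hs : Tendsto s atTop (𝓝 0))
    (hn : (fun n : ℕ => (n : ℝ)⁻¹) =O[atTop] fun n => s n ^ 3)
    (hq : HasQuadExpansion atTop s (fun n => n * q n) a₀ a₁ a₂) :
    HasQuadExpansion atTop s (fun n => (1 - q n) ^ (n - 1))
      (Real.exp (-a₀)) (Real.exp (-a₀) * -a₁) (Real.exp (-a₀) * (a₁ ^ 2 / 2 - a₂)) := by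
  have hq_lt := (tendsto_zero_of_hasQuadExpansion_natCast_mul hs hn hq).eventually_lt_const
    zero_lt_one
  have h := (hasQuadExpansion_pred_mul_log_one_sub hs hn hq).exp hs
  rw [neg_sq, neg_add_eq_sub] at h
  refine h.congr' ?_
  filter_upwards [hq_lt] with n hlt
  rw [← Real.log_pow, Real.exp_log (pow_pos (sub_pos.2 hlt) _)]

end PowPred

theorem tendsto_inv_sq_atTop_zero : Tendsto (fun β : ℝ => (β ^ 2)⁻¹) atTop (𝓝 0) :=
  tendsto_inv_atTop_zero.comp (tendsto_pow_atTop two_ne_zero)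

section GaussianTail

theorem integrable_exp_neg_sq_div_two : Integrable fun u : ℝ => Real.exp (-u ^ 2 / 2) := by
  convert integrable_exp_neg_mul_sq (b := 1 / 2) (by norm_num) using 3
  ring

theorem integrableOn_exp_neg_sq_div_two_div_pow {x : ℝ} (hx : 0 < x) (k : ℕ) :
    IntegrableOn (fun u : ℝ => Real.exp (-u ^ 2 / 2) / u ^ k) (Ioi x) := by
  have hcont : ContinuousOn (fun u : ℝ => Real.exp (-u ^ 2 / 2) / u ^ k) (Ioi x) :=
    ContinuousOn.div (by fun_prop) (by fun_prop) fun u hu => (pow_pos (hx.trans hu) k).ne'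
  refine (integrable_exp_neg_sq_div_two.integrableOn.div_const (x ^ k)).mono'
    (hcont.aestronglyMeasurable measurableSet_Ioi) ?_
  filter_upwards [ae_restrict_mem measurableSet_Ioi] with u hu
  have hxu : x < u := hu
  rw [Real.norm_of_nonneg (by have := hx.trans hxu; positivity)]
  gcongr

theorem hasDerivAt_neg_exp_neg_sq_div_two_div_pow {u : ℝ} (hu : u ≠ 0) (k : ℕ) :
    HasDerivAt (fun v : ℝ => -(Real.exp (-v ^ 2 / 2) / v ^ (k + 1)))
      (Real.exp (-u ^ 2 / 2) / u ^ k + (k + 1) * (Real.exp (-u ^ 2 / 2) / u ^ (k + 2))) u := by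
  have hexp : HasDerivAt (fun v : ℝ => Real.exp (-v ^ 2 / 2)) (Real.exp (-u ^ 2 / 2) * -u) u := by
    refine ((hasDerivAt_pow 2 u).fun_neg.div_const 2).exp.congr_deriv ?_
    push_cast
    ring
  refine (hexp.fun_div (hasDerivAt_pow (k + 1) u) (pow_ne_zero _ hu)).fun_neg.congr_deriv ?_
  push_cast
  field_simp
  ring

theorem tendsto_exp_neg_sq_div_two_div_pow_atTop {k : ℕ} (hk : k ≠ 0) :
    Tendsto (fun u : ℝ => Real.exp (-u ^ 2 / 2) / u ^ k) atTop (𝓝 0) := by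
  refine (tendsto_inv_atTop_zero.comp (tendsto_pow_atTop hk)).zero_mul_isBoundedUnder_le
    (isBoundedUnder_of ⟨1, fun u => ?_⟩) |>.congr fun u => (div_eq_inv_mul _ _).symm
  have := sq_nonneg u
  simp only [Function.comp_apply, Real.norm_eq_abs, Real.abs_exp, Real.exp_le_one_iff]
  linarith

theorem integral_Ioi_exp_neg_sq_div_two_div_pow {x : ℝ} (hx : 0 < x) (k : ℕ) :
    ∫ u in Ioi x, Real.exp (-u ^ 2 / 2) / u ^ k =
      Real.exp (-x ^ 2 / 2) / x ^ (k + 1) -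
        (k + 1) * ∫ u in Ioi x, Real.exp (-u ^ 2 / 2) / u ^ (k + 2) := by
  have hint := integrableOn_exp_neg_sq_div_two_div_pow hx k
  have hint' := (integrableOn_exp_neg_sq_div_two_div_pow hx (k + 2)).const_mul ((k : ℝ) + 1)
  have hftc := integral_Ioi_of_hasDerivAt_of_tendsto'
    (fun u hu => hasDerivAt_neg_exp_neg_sq_div_two_div_pow (hx.trans_le hu).ne' k)
    (hint.add hint') (tendsto_exp_neg_sq_div_two_div_pow_atTop k.succ_ne_zero).neg
  rw [integral_add hint hint', integral_const_mul] at hftc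
  linarith

/-- The negative moment `∫ₓ^∞ u^{-k} e^{-u²/2} du` of the Gaussian tail, divided by its leading
asymptotics `x^{-k-1} e^{-x²/2}`; for `k = 0` and `x > 0` this is `x` times the Mills ratio of the
normal law. -/
noncomputable def scaledGaussianTail (k : ℕ) (x : ℝ) : ℝ :=
  x ^ (k + 1) * Real.exp (x ^ 2 / 2) * ∫ u in Ioi x, Real.exp (-u ^ 2 / 2) / u ^ k

variable {x : ℝ}

theorem scaledGaussianTail_eq_one_sub (hx : 0 < x) (k : ℕ) :
    scaledGaussianTail k x = 1 - (k + 1) * (x ^ 2)⁻¹ * scaledGaussianTail (k + 2) x := by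
  have hexp : Real.exp (x ^ 2 / 2) * Real.exp (-(x ^ 2 / 2)) = 1 := by
    rw [← Real.exp_add, add_neg_cancel, Real.exp_zero]
  rw [scaledGaussianTail, integral_Ioi_exp_neg_sq_div_two_div_pow hx k, scaledGaussianTail, neg_div]
  field_simp
  linear_combination x ^ 2 * hexp

theorem scaledGaussianTail_nonneg (hx : 0 < x) (k : ℕ) : 0 ≤ scaledGaussianTail k x :=
  mul_nonneg (by positivity) <| setIntegral_nonneg measurableSet_Ioi fun u hu => by
    have := hx.trans hu
    positivity

theorem scaledGaussianTail_le_one (hx : 0 < x) (k : ℕ) : scaledGaussianTail k x ≤ 1 := by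
  rw [scaledGaussianTail_eq_one_sub hx, sub_le_self_iff]
  have := scaledGaussianTail_nonneg hx (k + 2)
  positivity

theorem hasQuadExpansion_scaledGaussianTail_zero :
    HasQuadExpansion atTop (fun x : ℝ => (x ^ 2)⁻¹) (scaledGaussianTail 0) 1 (-1) 3 := by
  refine IsBigO.of_bound 15 ?_
  filter_upwards [eventually_gt_atTop 0] with x hx
  have hrem : scaledGaussianTail 0 x - (1 + -1 * (x ^ 2)⁻¹ + 3 * (x ^ 2)⁻¹ ^ 2) =
      -(15 * (x ^ 2)⁻¹ ^ 3 * scaledGaussianTail 6 x) := by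
    rw [scaledGaussianTail_eq_one_sub hx 0, scaledGaussianTail_eq_one_sub hx 2,
      scaledGaussianTail_eq_one_sub hx 4]
    push_cast
    ring
  have hnonneg := scaledGaussianTail_nonneg hx 6
  rw [hrem, norm_neg, Real.norm_of_nonneg (by positivity), Real.norm_of_nonneg (by positivity)]
  exact mul_le_of_le_one_right (by positivity) (scaledGaussianTail_le_one hx 6)

theorem one_sub_stdNormalCDF_eq_integral_Ioi (x : ℝ) :
    1 - stdNormalCDF x = (∫ u in Ioi x, Real.exp (-u ^ 2 / 2)) / Real.sqrt (2 * Real.pi) := by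
  have hpdf : (fun u : ℝ => Real.exp (-u ^ 2 / 2) / Real.sqrt (2 * Real.pi)) =
      gaussianPDFReal 0 1 := by
    ext u
    simp [gaussianPDFReal, div_eq_inv_mul]
  have hint := integrable_gaussianPDFReal 0 1
  rw [← integral_div, stdNormalCDF, hpdf, ← integral_gaussianPDFReal_eq_one 0 one_ne_zero,
    ← intervalIntegral.integral_Iic_add_Ioi hint.integrableOn hint.integrableOn,
    add_sub_cancel_left]

theorem one_sub_stdNormalCDF_eq_scaledGaussianTail (hx : x ≠ 0) :
    1 - stdNormalCDF x =
      Real.exp (-x ^ 2 / 2) / (Real.sqrt (2 * Real.pi) * x) * scaledGaussianTail 0 x := by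
  have hexp : Real.exp (-(x ^ 2 / 2)) * Real.exp (x ^ 2 / 2) = 1 := by
    rw [← Real.exp_add, neg_add_cancel, Real.exp_zero]
  rw [one_sub_stdNormalCDF_eq_integral_Ioi]
  simp only [scaledGaussianTail, zero_add, pow_one, pow_zero, div_one, neg_div]
  field_simp
  linear_combination -(∫ u in Ioi x, Real.exp (-(u ^ 2 / 2))) * hexp

end GaussianTail

section PoweredLevel

/-- The paper's level `g_n = (c_n x + d_n)^{1/t}`, as a function of `β = b_n`. -/
noncomputable def poweredLevel (t x β : ℝ) : ℝ := (t * β ^ (t - 2) * x + β ^ t) ^ (1 / t)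

/-- The paper's `ϑ₁`: minus the coefficient of `b_n⁻²` in the expansion of `n eˣ (1 - Φ(g_n))`. -/
noncomputable def thetaOne (t x : ℝ) : ℝ := 1 + x + (2 - t) / 2 * x ^ 2

/-- The paper's `ϑ₂`: the coefficient of `b_n⁻⁴` in the expansion of `n eˣ (1 - Φ(g_n))`. -/
noncomputable def thetaTwo (t x : ℝ) : ℝ :=
  3 + 3 * x + 3 / 2 * x ^ 2 + (2 - t) * (2 * t + 1) / 6 * x ^ 3 + (t - 2) ^ 2 / 8 * x ^ 4

variable {t β : ℝ}

theorem mul_rpow_sub_two_mul_add_rpow (hβ : 0 < β) (t x : ℝ) :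
    t * β ^ (t - 2) * x + β ^ t = β ^ t * (1 + t * x * (β ^ 2)⁻¹) := by
  rw [Real.rpow_sub hβ, Real.rpow_two]
  ring

theorem eventually_one_add_mul_inv_sq_pos (t x : ℝ) :
    ∀ᶠ β : ℝ in atTop, 0 < 1 + t * x * (β ^ 2)⁻¹ := by
  have h := (tendsto_inv_sq_atTop_zero.const_mul (t * x)).const_add 1
  rw [mul_zero, add_zero] at h
  exact h.eventually_const_lt zero_lt_one

theorem poweredLevel_rpow (ht : t ≠ 0) (hβ : 0 < β) {x : ℝ}
    (hx : 0 < 1 + t * x * (β ^ 2)⁻¹) (p : ℝ) :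
    poweredLevel t x β ^ p = β ^ p * (1 + t * x * (β ^ 2)⁻¹) ^ (p / t) := by
  rw [poweredLevel, mul_rpow_sub_two_mul_add_rpow hβ, ← Real.rpow_mul (by positivity),
    Real.mul_rpow (by positivity) hx.le, ← Real.rpow_mul hβ.le]
  congr 2 <;> field_simp

theorem eventually_poweredLevel_rpow (ht : t ≠ 0) (x p : ℝ) :
    ∀ᶠ β : ℝ in atTop,
      poweredLevel t x β ^ p = β ^ p * (1 + t * x * (β ^ 2)⁻¹) ^ (p / t) := by
  filter_upwards [eventually_gt_atTop 0, eventually_one_add_mul_inv_sq_pos t x] with β hβ hw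
  exact poweredLevel_rpow ht hβ hw p

theorem tendsto_poweredLevel_atTop (ht : t ≠ 0) (x : ℝ) :
    Tendsto (poweredLevel t x) atTop atTop := by
  have hratio := (hasQuadExpansion_one_add_rpow tendsto_inv_sq_atTop_zero (t * x) (1 / t)).tendsto
    tendsto_inv_sq_atTop_zero
  refine (tendsto_id.atTop_mul_pos one_pos hratio).congr' ?_
  filter_upwards [eventually_poweredLevel_rpow ht x 1] with β hβ
  simpa using hβ.symm

theorem hasQuadExpansion_div_poweredLevel (ht : t ≠ 0) (x : ℝ) :
    HasQuadExpansion atTop (fun β : ℝ => (β ^ 2)⁻¹) (fun β => β / poweredLevel t x β)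
      1 (-x) ((1 + t) / 2 * x ^ 2) := by
  have h := hasQuadExpansion_one_add_rpow tendsto_inv_sq_atTop_zero (t * x) (-1 / t)
  have hcoeff₁ : -1 / t * (t * x) = -x := by field_simp
  have hcoeff₂ : -1 / t * (-1 / t - 1) / 2 * (t * x) ^ 2 = (1 + t) / 2 * x ^ 2 := by
    field_simp
    ring
  rw [hcoeff₁, hcoeff₂] at h
  refine h.congr' ?_
  filter_upwards [eventually_poweredLevel_rpow ht x (-1), eventually_ne_atTop 0] with β hlevel hβ
  rw [Real.rpow_neg_one, Real.rpow_neg_one] at hlevel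
  rw [div_eq_mul_inv β, hlevel, mul_inv_cancel_left₀ hβ]

theorem hasQuadExpansion_inv_poweredLevel_sq (ht : t ≠ 0) (x : ℝ) :
    HasQuadExpansion atTop (fun β : ℝ => (β ^ 2)⁻¹) (fun β => (poweredLevel t x β ^ 2)⁻¹)
      0 1 (-2 * x) := by
  have hratio := hasQuadExpansion_div_poweredLevel ht x
  have h := HasQuadExpansion.gauge.mul tendsto_inv_sq_atTop_zero
    (hratio.mul tendsto_inv_sq_atTop_zero hratio)
  convert h.congr' (h := fun β => (poweredLevel t x β ^ 2)⁻¹) ?_ using 1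
  · ring
  · ring
  · ring
  filter_upwards [eventually_ne_atTop 0] with β hβ
  field_simp

theorem hasQuadExpansion_half_sq_sub_poweredLevel_sq (ht : t ≠ 0) (x : ℝ) :
    HasQuadExpansion atTop (fun β : ℝ => (β ^ 2)⁻¹) (fun β => (β ^ 2 - poweredLevel t x β ^ 2) / 2)
      (-x) (-((2 - t) / 2 * x ^ 2)) (-((2 - t) * (1 - t) / 3 * x ^ 3)) := by
  -- With `y = t x β⁻²`, `β² - g² = -β² ((1 + y)^{2/t} - 1)` is `-t x` times the slope of
  -- `(1 + ·)^{2/t}` from `0` to `y`; expanding the slope absorbs the factor `β²`.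
  have h := (hasQuadExpansion_dslope_one_add_rpow tendsto_inv_sq_atTop_zero (t * x)
    (2 / t)).const_mul (-(t * x) / 2)
  convert h.congr' ?_ using 1
  · field_simp
  · field_simp
  · field_simp
    ring
  filter_upwards [eventually_poweredLevel_rpow ht x 2, eventually_ne_atTop 0] with β hlevel hβ
  have hchord := sub_smul_dslope (fun z : ℝ => (1 + z) ^ (2 / t)) 0 (t * x * (β ^ 2)⁻¹)
  simp only [sub_zero, smul_eq_mul, add_zero, Real.one_rpow] at hchord
  rw [Real.rpow_two, Real.rpow_two] at hlevel
  rw [hlevel]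
  field_simp at hchord ⊢
  linear_combination -hchord

theorem hasQuadExpansion_scaledGaussianTail_poweredLevel (ht : t ≠ 0) (x : ℝ) :
    HasQuadExpansion atTop (fun β : ℝ => (β ^ 2)⁻¹)
      (fun β => scaledGaussianTail 0 (poweredLevel t x β)) 1 (-1) (3 + 2 * x) := by
  convert (hasQuadExpansion_scaledGaussianTail_zero.comp_tendsto
    (tendsto_poweredLevel_atTop ht x)).change_gauge tendsto_inv_sq_atTop_zero
      (hasQuadExpansion_inv_poweredLevel_sq ht x) using 1
  · rfl
  · ring
  · ring

/-- `β / φ(β)` for the standard normal density `φ`: the paper's `b_n` is the positive solution of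
`normalScale b_n = n`. -/
noncomputable def normalScale (β : ℝ) : ℝ := Real.sqrt (2 * Real.pi) * β * Real.exp (β ^ 2 / 2)

theorem normalScale_mul_one_sub_stdNormalCDF (β : ℝ) {y : ℝ} (hy : y ≠ 0) :
    normalScale β * (1 - stdNormalCDF y) =
      Real.exp ((β ^ 2 - y ^ 2) / 2) * (β / y) * scaledGaussianTail 0 y := by
  rw [normalScale, one_sub_stdNormalCDF_eq_scaledGaussianTail hy, sub_div, sub_eq_add_neg,
    Real.exp_add, neg_div]
  field_simp

theorem hasQuadExpansion_normalScale_mul_one_sub_stdNormalCDF (ht : t ≠ 0) (x : ℝ) :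
    HasQuadExpansion atTop (fun β : ℝ => (β ^ 2)⁻¹)
      (fun β => normalScale β * (1 - stdNormalCDF (poweredLevel t x β)))
      (Real.exp (-x)) (-(Real.exp (-x) * thetaOne t x)) (Real.exp (-x) * thetaTwo t x) := by
  have hs := tendsto_inv_sq_atTop_zero
  have h := (((hasQuadExpansion_half_sq_sub_poweredLevel_sq ht x).exp hs).mul hs
    (hasQuadExpansion_div_poweredLevel ht x)).mul hs
      (hasQuadExpansion_scaledGaussianTail_poweredLevel ht x)
  convert h.congr' ?_ using 1
  · ring
  · rw [thetaOne]
    ring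
  · rw [thetaTwo]
    ring
  filter_upwards [(tendsto_poweredLevel_atTop ht x).eventually_ne_atTop 0] with β hlevel
  exact (normalScale_mul_one_sub_stdNormalCDF β hlevel).symm

end PoweredLevel

section NormingSequence

theorem normalScale_eq_of_sq_eq {β y : ℝ} (hβ : 0 ≤ β) (hy : 0 ≤ y)
    (h : 2 * Real.pi * β ^ 2 * Real.exp (β ^ 2) = y ^ 2) : normalScale β = y := by
  rw [← sq_eq_sq₀ (by unfold normalScale; positivity) hy, ← h, normalScale, mul_pow, mul_pow,
    Real.sq_sqrt (by positivity), ← Real.exp_nat_mul]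
  congr 2
  push_cast
  ring

theorem inv_normalScale_isBigO :
    (fun β => (normalScale β)⁻¹) =O[atTop] fun β : ℝ => (β ^ 2)⁻¹ ^ 3 := by
  refine IsBigO.of_bound 48 ?_
  filter_upwards [eventually_ge_atTop 1] with β hβ
  have hexp : (β ^ 2 / 2) ^ 3 / 6 ≤ Real.exp (β ^ 2 / 2) := by
    simpa [Nat.factorial] using Real.pow_div_factorial_le_exp (β ^ 2 / 2) (by positivity) 3
  have hsqrt : 1 ≤ Real.sqrt (2 * Real.pi) := Real.one_le_sqrt.2 (by linarith [Real.pi_gt_three])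
  have hscale : β ^ 6 / 48 ≤ normalScale β := calc
    β ^ 6 / 48 = 1 * 1 * ((β ^ 2 / 2) ^ 3 / 6) := by ring
    _ ≤ normalScale β := by unfold normalScale; gcongr
  rw [Real.norm_of_nonneg (inv_nonneg.2 (le_trans (by positivity) hscale)),
    Real.norm_of_nonneg (by positivity)]
  calc (normalScale β)⁻¹ ≤ (β ^ 6 / 48)⁻¹ := by gcongr
    _ = 48 * (β ^ 2)⁻¹ ^ 3 := by field_simp

theorem normalScale_monotoneOn : MonotoneOn normalScale (Ici 0) := by
  intro y hy z _ hyz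
  have hy₀ : 0 ≤ y := hy
  have hz₀ : 0 ≤ z := hy₀.trans hyz
  unfold normalScale
  gcongr

theorem tendsto_atTop_of_normalScale_comp {α : Type*} {l : Filter α} {b : α → ℝ}
    (hb : ∀ᶠ i in l, 0 ≤ b i) (h : Tendsto (fun i => normalScale (b i)) l atTop) :
    Tendsto b l atTop := by
  refine tendsto_atTop.2 fun K => ?_
  filter_upwards [hb, h.eventually_gt_atTop (normalScale (max K 0))] with i hi hscale
  exact (le_max_left K 0).trans
    (normalScale_monotoneOn.reflect_lt (le_max_right K 0) hi hscale).le

variable {b : ℕ → ℝ}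

theorem eventually_normalScale_eq_natCast
    (hb : ∀ n : ℕ, 1 ≤ n → 0 < b n ∧
      2 * Real.pi * b n ^ 2 * Real.exp (b n ^ 2) = (n : ℝ) ^ 2) :
    ∀ᶠ n : ℕ in atTop, 0 ≤ b n ∧ normalScale (b n) = n := by
  filter_upwards [eventually_ge_atTop 1] with n hn
  exact ⟨(hb n hn).1.le, normalScale_eq_of_sq_eq (hb n hn).1.le n.cast_nonneg (hb n hn).2⟩

theorem tendsto_atTop_of_normalScale_eq_natCast
    (hb : ∀ᶠ n : ℕ in atTop, 0 ≤ b n ∧ normalScale (b n) = n) : Tendsto b atTop atTop :=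
  tendsto_atTop_of_normalScale_comp (hb.mono fun _ h => h.1) <|
    tendsto_natCast_atTop_atTop.congr' (hb.mono fun _ h => h.2.symm)

theorem hasQuadExpansion_stdNormalCDF_poweredLevel_pow_pred {t : ℝ} (ht : t ≠ 0) (x : ℝ)
    (hb : ∀ᶠ n : ℕ in atTop, 0 ≤ b n ∧ normalScale (b n) = n) :
    HasQuadExpansion atTop (fun n => (b n ^ 2)⁻¹)
      (fun n => stdNormalCDF (poweredLevel t x (b n)) ^ (n - 1))
      (gumbel x) (gumbel x * (Real.exp (-x) * thetaOne t x))
      (gumbel x * ((Real.exp (-x) * thetaOne t x) ^ 2 / 2 - Real.exp (-x) * thetaTwo t x)) := by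
  have hb_top := tendsto_atTop_of_normalScale_eq_natCast hb
  have hinv : (fun n : ℕ => (n : ℝ)⁻¹) =O[atTop] fun n => (b n ^ 2)⁻¹ ^ 3 :=
    (inv_normalScale_isBigO.comp_tendsto hb_top).congr' (hb.mono fun n h => congrArg (·⁻¹) h.2)
      EventuallyEq.rfl
  have htail : HasQuadExpansion atTop (fun n => (b n ^ 2)⁻¹)
      (fun n : ℕ => n * (1 - stdNormalCDF (poweredLevel t x (b n)))) _ _ _ :=
    ((hasQuadExpansion_normalScale_mul_one_sub_stdNormalCDF ht x).comp_tendsto hb_top).congr'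
      (hb.mono fun n h => congrArg (· * _) h.2)
  simpa only [Function.comp_def, sub_sub_cancel, neg_neg, neg_sq, gumbel] using
    hasQuadExpansion_one_sub_pow_pred (tendsto_inv_sq_atTop_zero.comp hb_top) hinv htail

end NormingSequence

theorem powered_extremes_cdf_power_expansion_general
    (b : ℕ → ℝ)
    (hb : ∀ n : ℕ, 1 ≤ n → 0 < b n ∧
      2 * Real.pi * (b n) ^ 2 * Real.exp ((b n) ^ 2) = (n : ℝ) ^ 2)
    (t : ℝ) (ht : t ≠ 0) (x : ℝ)
    (c d g : ℕ → ℝ)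
    (hc : ∀ n : ℕ, c n = t * b n ^ (t - 2))
    (hd : ∀ n : ℕ, d n = b n ^ t)
    (hg : ∀ n : ℕ, g n = (c n * x + d n) ^ (1 / t)) :
    ∃ C > (0 : ℝ), ∃ N : ℕ, ∀ n : ℕ, N ≤ n →
      0 < c n * x + d n ∧
      |stdNormalCDF (g n) ^ (n - 1) -
        gumbel x * (1 + thetaOne t x * Real.exp (-x) / (b n) ^ 2 +
          Real.exp (-x) / (b n) ^ 4 *
            (thetaOne t x ^ 2 / 2 * Real.exp (-x) - thetaTwo t x))|
      ≤ C / (b n) ^ 6 := by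
  have hscale := eventually_normalScale_eq_natCast hb
  have hb_top := tendsto_atTop_of_normalScale_eq_natCast hscale
  obtain ⟨C, hC, hbound⟩ :=
    (hasQuadExpansion_stdNormalCDF_poweredLevel_pow_pred ht x hscale).exists_pos
  obtain ⟨N, hN⟩ := eventually_atTop.1 <| hbound.bound.and <|
    (hb_top.eventually_gt_atTop 0).and <| hb_top.eventually (eventually_one_add_mul_inv_sq_pos t x)
  refine ⟨C, hC, N, fun n hn => ?_⟩
  obtain ⟨hexpansion, hpos, hlevel⟩ := hN n hn
  have hgn : g n = poweredLevel t x (b n) := by rw [hg, hc, hd, poweredLevel]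
  constructor
  · rw [hc, hd, mul_rpow_sub_two_mul_add_rpow hpos]
    positivity
  · rw [Real.norm_eq_abs, Real.norm_of_nonneg (by positivity)] at hexpansion
    rw [hgn]
    convert hexpansion using 2 <;> ring

/-- With `b_n` the unique positive solution of `2π b_n² exp(b_n²) = n²`,
`c_n = t b_n^{t−2}`, `d_n = b_n^t` (for `t > 0`, `t ≠ 2`) and `g_n = (c_n x + d_n)^{1/t}`:
`Φ(g_n)^{n−1} = Λ(x)(1 + ϑ₁ e^{−x} b_n^{−2} + e^{−x} b_n^{−4}((ϑ₁²/2)e^{−x} − ϑ₂) + O(b_n^{−6}))`,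
where `ϑ₁ = 1 + x + ((2−t)/2)x²` and
`ϑ₂ = 3 + 3x + (3/2)x² + ((2−t)(2t+1)/6)x³ + ((t−2)²/8)x⁴`. -/
theorem powered_extremes_cdf_power_expansion
    (b : ℕ → ℝ)
    (hb : ∀ n : ℕ, 1 ≤ n → 0 < b n ∧
      2 * Real.pi * (b n) ^ 2 * Real.exp ((b n) ^ 2) = (n : ℝ) ^ 2)
    (t : ℝ) (ht : 0 < t) (ht2 : t ≠ 2) (x : ℝ)
    (c d g : ℕ → ℝ)
    (hc : ∀ n : ℕ, c n = t * b n ^ (t - 2))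
    (hd : ∀ n : ℕ, d n = b n ^ t)
    (hg : ∀ n : ℕ, g n = (c n * x + d n) ^ (1 / t)) :
    ∃ C > (0 : ℝ), ∃ N : ℕ, ∀ n : ℕ, N ≤ n →
      0 < c n * x + d n ∧
      |stdNormalCDF (g n) ^ (n - 1) -
        gumbel x * (1 + (1 + x + (2 - t) / 2 * x ^ 2) * Real.exp (-x) / (b n) ^ 2 +
          Real.exp (-x) / (b n) ^ 4 *
            ((1 + x + (2 - t) / 2 * x ^ 2) ^ 2 / 2 * Real.exp (-x) -
              (3 + 3 * x + 3 / 2 * x ^ 2 + (2 - t) * (2 * t + 1) / 6 * x ^ 3 +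
                (t - 2) ^ 2 / 8 * x ^ 4)))|
      ≤ C / (b n) ^ 6 := 
  powered_extremes_cdf_power_expansion_general b hb t ht.ne' x c d g hc hd hg
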